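/- arXiv:2401.17012 — 5 statements merged into one kernel-verified Lean document; each statement's English description precedes it below -/
import Mathlib

section
/- Let f and g be nonzero polynomials over ℝ with natDegree f ≠ natDegree g. Then the leading coefficient of f·g′ − g·f′ equals (natDegree g − natDegree f)·(leadingCoeff f)·(leadingCoeff g). -/
open Polynomial

theorem coeff_mul_derivative_of_natDegree_le {R : Type*} [Semiring R] {p q : R[X]} {m n : ℕ}
    (hp : p.natDegree ≤ m) (hq : q.natDegree ≤ n) :
    (p * derivative q).coeff (m + n - 1) = p.coeff m * q.coeff n * n := by
  rcases n with _ | k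
  · simp [derivative_of_natDegree_zero (Nat.le_zero.mp hq)]
  · have hq' : (derivative q).natDegree ≤ k :=
      (natDegree_derivative_le q).trans (Nat.sub_le_of_le_add hq)
    rw [← add_assoc, Nat.add_sub_cancel, coeff_mul_add_eq_of_natDegree_le hp hq',
      coeff_derivative, mul_assoc, Nat.cast_succ]

section Wronskian

variable {R : Type*} [CommRing R]

theorem coeff_wronskian_of_natDegree_le {f g : R[X]} {m n : ℕ}
    (hf : f.natDegree ≤ m) (hg : g.natDegree ≤ n) :
    (wronskian f g).coeff (m + n - 1) = ((n : R) - m) * f.coeff m * g.coeff n := by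
  have hgf : (derivative f * g).coeff (m + n - 1) = g.coeff n * f.coeff m * m := by
    rw [mul_comm, add_comm m, coeff_mul_derivative_of_natDegree_le hg hf]
  rw [wronskian, coeff_sub, coeff_mul_derivative_of_natDegree_le hf hg, hgf]
  ring

theorem natDegree_wronskian_of_coeff_ne_zero {f g : R[X]}
    (h : (wronskian f g).coeff (f.natDegree + g.natDegree - 1) ≠ 0) :
    (wronskian f g).natDegree = f.natDegree + g.natDegree - 1 := by
  have hw : wronskian f g ≠ 0 := fun hw => h (by rw [hw, coeff_zero])
  exact natDegree_eq_of_le_of_coeff_ne_zero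
    (Nat.le_sub_one_of_lt (natDegree_wronskian_lt_add hw)) h

theorem bracket_leadingCoeff_general (f g : R[X])
    (h : ((g.natDegree : R) - f.natDegree) * f.leadingCoeff * g.leadingCoeff ≠ 0) :
    (f * derivative g - g * derivative f).leadingCoeff =
      ((g.natDegree : R) - f.natDegree) * f.leadingCoeff * g.leadingCoeff := by
  have htop : (wronskian f g).coeff (f.natDegree + g.natDegree - 1) =
      ((g.natDegree : R) - f.natDegree) * f.leadingCoeff * g.leadingCoeff :=
    coeff_wronskian_of_natDegree_le le_rfl le_rfl
  rw [mul_comm g, ← wronskian, leadingCoeff,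
    natDegree_wronskian_of_coeff_ne_zero (htop.trans_ne h), htop]

end Wronskian

theorem bracket_leadingCoeff
    (f g : ℝ[X]) (hf : f ≠ 0) (hg : g ≠ 0)
    (hdeg : f.natDegree ≠ g.natDegree) :
    (f * derivative g - g * derivative f).leadingCoeff =
      ((g.natDegree : ℝ) - (f.natDegree : ℝ)) * f.leadingCoeff * g.leadingCoeff := by
  have hdeg' : (g.natDegree : ℝ) - f.natDegree ≠ 0 := sub_ne_zero.mpr (mod_cast hdeg.symm)
  exact bracket_leadingCoeff_general f g (by simp [hdeg', hf, hg])
end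

section
/- Let S be an ℝ-submodule of the polynomial ring ℝ[x] that is closed under the bracket ⁅f, g⁆ := f·g′ − g·f′. If S contains two polynomials f and g with natDegree f ≥ 2, natDegree g ≥ 2, and natDegree f ≠ natDegree g, then for every natural number N there exists a polynomial h ∈ S with natDegree h > N; in particular S is not finite-dimensional over ℝ. -/
open Polynomial

/-!
The bracket `⁅f, g⁆ = f * g' - g * f'` is the Wronskian of `f` and `g`. For `f` and `g` of degrees
`m ≠ n` its coefficient of degree `m + n - 1` is `n - m` times the product of the leading
coefficients, so the bracket has degree exactly `m + n - 1`. If `2 ≤ m < n`, bracketing with `f`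
therefore raises the degree of `g` by `m - 1 ≥ 1`, and iterating produces arbitrarily high degrees.
-/

section Semiring

variable {R : Type*} [Semiring R]

theorem coeff_X_mul_derivative (p : R[X]) (n : ℕ) :
    (X * derivative p).coeff n = p.coeff n * n := by
  cases n with
  | zero => simp
  | succ n => rw [coeff_X_mul, coeff_derivative, Nat.cast_succ]

theorem natDegree_X_mul_derivative_le (p : R[X]) :
    (X * derivative p).natDegree ≤ p.natDegree := by
  refine natDegree_le_iff_coeff_eq_zero.mpr fun n hn => ?_
  rw [coeff_X_mul_derivative, coeff_eq_zero_of_natDegree_lt hn, zero_mul]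

theorem not_finite_of_forall_exists_lt_natDegree {S : Submodule R R[X]}
    (hS : ∀ N : ℕ, ∃ p ∈ S, N < p.natDegree) : ¬ Module.Finite R S := by
  intro hfin
  obtain ⟨s, rfl⟩ := Module.Finite.iff_fg.mp hfin
  obtain ⟨n, hn⟩ := span_le_degreeLE_of_finite s.finite_toSet
  obtain ⟨p, hp, hnp⟩ := hS n
  exact hnp.not_ge (natDegree_le_of_degree_le (mem_degreeLE.mp (hn hp)))

end Semiring

section CommRing

variable {R : Type*} [CommRing R]

-- The factor `X` replaces the index `m + n - 1`, whose subtraction would be truncated.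
theorem coeff_X_mul_wronskian (f g : R[X]) :
    (X * wronskian f g).coeff (f.natDegree + g.natDegree) =
      (g.natDegree - f.natDegree) * (f.leadingCoeff * g.leadingCoeff) := by
  have euler_form : X * wronskian f g = f * (X * derivative g) - (X * derivative f) * g := by
    rw [wronskian]; ring
  rw [euler_form, coeff_sub,
    coeff_mul_add_eq_of_natDegree_le le_rfl (natDegree_X_mul_derivative_le g),
    coeff_mul_add_eq_of_natDegree_le (natDegree_X_mul_derivative_le f) le_rfl,
    coeff_X_mul_derivative, coeff_X_mul_derivative]
  simp only [coeff_natDegree]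
  ring

variable [NoZeroDivisors R] [CharZero R] {f g : R[X]}

theorem natDegree_wronskian_add_one (hf : f ≠ 0) (hg : g ≠ 0)
    (hfg : f.natDegree ≠ g.natDegree) :
    (wronskian f g).natDegree + 1 = f.natDegree + g.natDegree := by
  have coeff_ne_zero : (X * wronskian f g).coeff (f.natDegree + g.natDegree) ≠ 0 := by
    rw [coeff_X_mul_wronskian]
    exact mul_ne_zero (sub_ne_zero.mpr (Nat.cast_injective.ne hfg.symm))
      (mul_ne_zero (leadingCoeff_ne_zero.mpr hf) (leadingCoeff_ne_zero.mpr hg))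
  have wronskian_ne_zero : wronskian f g ≠ 0 := by
    intro h
    simp [h] at coeff_ne_zero
  have : Nontrivial R := (Nat.cast_injective (R := R)).nontrivial
  refine le_antisymm (natDegree_wronskian_lt_add wronskian_ne_zero) ?_
  rw [← natDegree_X_mul wronskian_ne_zero]
  exact le_natDegree_of_ne_zero coeff_ne_zero

theorem natDegree_iterate_wronskian_add (hf : 0 < f.natDegree)
    (hfg : f.natDegree < g.natDegree) (k : ℕ) :
    ((wronskian f)^[k] g).natDegree + k = g.natDegree + k * f.natDegree := by
  induction k with
  | zero => simp
  | succ k ih =>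
    rw [Function.iterate_succ_apply']
    set p := (wronskian f)^[k] g
    have hfp : f.natDegree < p.natDegree := by
      have := Nat.le_mul_of_pos_right k hf
      omega
    have := natDegree_wronskian_add_one (ne_zero_of_natDegree_gt hf)
      (ne_zero_of_natDegree_gt hfp) hfp.ne
    rw [Nat.succ_mul]
    omega

theorem exists_lt_natDegree_of_mapsTo_wronskian {S : Set R[X]}
    (hS : Set.MapsTo (wronskian f) S S) (hg : g ∈ S)
    (hf : 2 ≤ f.natDegree) (hfg : f.natDegree < g.natDegree) (N : ℕ) :
    ∃ h ∈ S, N < h.natDegree := by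
  refine ⟨(wronskian f)^[N] g, hS.iterate N hg, ?_⟩
  have := natDegree_iterate_wronskian_add (by omega) hfg N
  have := Nat.mul_le_mul_left N hf
  omega

theorem bracket_closed_two_degrees_infinite_dim_general (S : Submodule R R[X])
    (hclosed : ∀ f ∈ S, ∀ g ∈ S, f * derivative g - g * derivative f ∈ S)
    (f g : R[X]) (hfS : f ∈ S) (hgS : g ∈ S)
    (hf2 : 2 ≤ f.natDegree) (hg2 : 2 ≤ g.natDegree)
    (hne : f.natDegree ≠ g.natDegree) :
    (∀ N : ℕ, ∃ h ∈ S, N < h.natDegree) ∧ ¬ Module.Finite R S := by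
  have mapsTo_wronskian {p : R[X]} (hp : p ∈ S) : Set.MapsTo (wronskian p) S S := by
    intro q hq
    rw [wronskian, mul_comm (derivative p)]
    exact hclosed p hp q hq
  have unbounded (N : ℕ) : ∃ h ∈ S, N < h.natDegree := by
    rcases hne.lt_or_gt with hfg | hgf
    · exact exists_lt_natDegree_of_mapsTo_wronskian (mapsTo_wronskian hfS) hgS hf2 hfg N
    · exact exists_lt_natDegree_of_mapsTo_wronskian (mapsTo_wronskian hgS) hfS hg2 hgf N
  exact ⟨unbounded, not_finite_of_forall_exists_lt_natDegree unbounded⟩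

end CommRing

theorem bracket_closed_two_degrees_infinite_dim
    (S : Submodule ℝ ℝ[X])
    (hclosed : ∀ f ∈ S, ∀ g ∈ S, f * derivative g - g * derivative f ∈ S)
    (f g : ℝ[X]) (hfS : f ∈ S) (hgS : g ∈ S)
    (hf2 : 2 ≤ f.natDegree) (hg2 : 2 ≤ g.natDegree)
    (hne : f.natDegree ≠ g.natDegree) :
    (∀ N : ℕ, ∃ h ∈ S, N < h.natDegree) ∧ ¬ FiniteDimensional ℝ S :=
  bracket_closed_two_degrees_infinite_dim_general S hclosed f g hfS hgS hf2 hg2 hne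
end

section
/- Let f and g be nonzero polynomials over ℝ with d₁ := natDegree f, d₂ := natDegree g, and d₁ > d₂ ≥ 2. Define h₀ := f and h_{k+1} := ⁅h_k, g⁆ = h_k·g′ − g·h_k′. Then for every natural number k, h_k is nonzero and natDegree h_k = d₁ + k·(d₂ − 1); in particular the degrees of the iterated brackets are strictly increasing and unbounded. -/
open Polynomial

/-!
The bracket `⁅p, g⁆ = p * g' - g * p'` is the Wronskian of `p` and `g`. Its coefficient in degree
`deg p + deg g - 1` is the product of the leading coefficients of `p` and `g` times
`deg g - deg p`, so bracketing with `g` raises the degree by exactly `deg g - 1` unless the two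
degrees agree in the coefficient ring. In characteristic zero, starting above `deg g`, the degrees
of the iterated brackets stay above `deg g`, so they never agree with it.
-/

theorem coeff_mul_derivative_natDegree_add_sub_one {R : Type*} [Semiring R] (p q : R[X]) :
    (p * derivative q).coeff (p.natDegree + q.natDegree - 1) =
      p.leadingCoeff * (q.leadingCoeff * q.natDegree) := by
  rcases hq : q.natDegree with _ | n
  · simp [derivative_of_natDegree_zero hq]
  · have hq' : (derivative q).natDegree ≤ n := by
      simpa [hq] using natDegree_derivative_le q
    rw [Nat.add_succ_sub_one, coeff_mul_add_eq_of_natDegree_le le_rfl hq', coeff_derivative,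
      leadingCoeff, leadingCoeff, hq, Nat.cast_succ]

section CommRing

variable {R : Type*} [CommRing R]

theorem coeff_wronskian_natDegree_add_sub_one (p q : R[X]) :
    (wronskian p q).coeff (p.natDegree + q.natDegree - 1) =
      p.leadingCoeff * q.leadingCoeff * (q.natDegree - p.natDegree) := by
  have hpq := coeff_mul_derivative_natDegree_add_sub_one p q
  have hqp := coeff_mul_derivative_natDegree_add_sub_one q p
  rw [add_comm q.natDegree, mul_comm q] at hqp
  rw [wronskian, coeff_sub, hpq, hqp]
  ring

variable [NoZeroDivisors R] {p q : R[X]}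

theorem coeff_wronskian_natDegree_add_sub_one_ne_zero (hp : p ≠ 0) (hq : q ≠ 0)
    (hdeg : (p.natDegree : R) ≠ q.natDegree) :
    (wronskian p q).coeff (p.natDegree + q.natDegree - 1) ≠ 0 := by
  rw [coeff_wronskian_natDegree_add_sub_one]
  exact mul_ne_zero (mul_ne_zero (leadingCoeff_ne_zero.mpr hp) (leadingCoeff_ne_zero.mpr hq))
    (sub_ne_zero.mpr hdeg.symm)

theorem wronskian_ne_zero_of_natDegree_ne (hp : p ≠ 0) (hq : q ≠ 0)
    (hdeg : (p.natDegree : R) ≠ q.natDegree) : wronskian p q ≠ 0 := by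
  intro hw
  simpa [hw] using coeff_wronskian_natDegree_add_sub_one_ne_zero hp hq hdeg

theorem natDegree_wronskian_of_natDegree_ne (hp : p ≠ 0) (hq : q ≠ 0)
    (hdeg : (p.natDegree : R) ≠ q.natDegree) :
    (wronskian p q).natDegree = p.natDegree + q.natDegree - 1 :=
  natDegree_eq_of_le_of_coeff_ne_zero
    (Nat.le_sub_one_of_lt
      (natDegree_wronskian_lt_add (wronskian_ne_zero_of_natDegree_ne hp hq hdeg)))
    (coeff_wronskian_natDegree_add_sub_one_ne_zero hp hq hdeg)

theorem ne_zero_and_natDegree_of_wronskian_rec {g : R[X]} {h : ℕ → R[X]} (hh₀ : h 0 ≠ 0)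
    (hg : 1 ≤ g.natDegree)
    (hdeg : ∀ k : ℕ, (((h 0).natDegree + k * (g.natDegree - 1) : ℕ) : R) ≠ g.natDegree)
    (hrec : ∀ k, h (k + 1) = wronskian (h k) g) (k : ℕ) :
    h k ≠ 0 ∧ (h k).natDegree = (h 0).natDegree + k * (g.natDegree - 1) := by
  have hg₀ : g ≠ 0 := ne_zero_of_natDegree_gt hg
  induction k with
  | zero => simpa using hh₀
  | succ k ih =>
    obtain ⟨hk₀, hk⟩ := ih
    have hne : ((h k).natDegree : R) ≠ g.natDegree := hk ▸ hdeg k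
    rw [hrec]
    refine ⟨wronskian_ne_zero_of_natDegree_ne hk₀ hg₀ hne, ?_⟩
    rw [natDegree_wronskian_of_natDegree_ne hk₀ hg₀ hne, hk, Nat.add_sub_assoc hg, add_assoc,
      Nat.succ_mul]

/-- The degrees are compared in `R`: `hdeg` says that the top coefficients of `h k * g'` and
`g * (h k)'` never cancel. -/
theorem iterated_bracket_degrees_general (f g : R[X]) (hf : f ≠ 0) (hg : 2 ≤ g.natDegree)
    (hdeg : ∀ k : ℕ, ((f.natDegree + k * (g.natDegree - 1) : ℕ) : R) ≠ g.natDegree)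
    (h : ℕ → R[X]) (h0 : h 0 = f)
    (hrec : ∀ k, h (k + 1) = h k * derivative g - g * derivative (h k)) :
    (∀ k, h k ≠ 0 ∧ (h k).natDegree = f.natDegree + k * (g.natDegree - 1)) ∧
    (∀ k, (h k).natDegree < (h (k + 1)).natDegree) ∧
    (∀ N : ℕ, ∃ k, N < (h k).natDegree) := by
  subst h0
  have hwronskian (k : ℕ) : h (k + 1) = wronskian (h k) g := by
    rw [hrec, wronskian, mul_comm g]
  have hformula := ne_zero_and_natDegree_of_wronskian_rec hf (one_le_two.trans hg) hdeg hwronskian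
  have hlt (k : ℕ) : (h k).natDegree < (h (k + 1)).natDegree := by
    rw [(hformula k).2, (hformula (k + 1)).2, Nat.succ_mul]
    lia
  have hmono : StrictMono fun k => (h k).natDegree := strictMono_nat_of_lt_succ hlt
  exact ⟨hformula, hlt, fun N => ⟨N + 1, hmono.le_apply⟩⟩

end CommRing

theorem iterated_bracket_degrees
    (f g : ℝ[X]) (hf : f ≠ 0) (hg : g ≠ 0)
    (d₁ d₂ : ℕ) (hd₁ : d₁ = f.natDegree) (hd₂ : d₂ = g.natDegree)
    (h21 : d₂ < d₁) (h2 : 2 ≤ d₂)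
    (h : ℕ → ℝ[X]) (h0 : h 0 = f)
    (hrec : ∀ k, h (k + 1) = h k * derivative g - g * derivative (h k)) :
    (∀ k, h k ≠ 0 ∧ (h k).natDegree = d₁ + k * (d₂ - 1)) ∧
    (∀ k, (h k).natDegree < (h (k + 1)).natDegree) ∧
    (∀ N : ℕ, ∃ k, N < (h k).natDegree) := by
  subst hd₁ hd₂
  exact iterated_bracket_degrees_general f g hf h2
    (fun _ => Nat.cast_injective.ne (Nat.lt_add_right _ h21).ne') h h0 hrec
end

section
/- Let a₀, a₁, a₂ : ℝ → ℝ and let x₁, x₂, x₃, x₄ : ℝ → ℝ be four solutions of the Riccati equation on an open interval I, i.e., for each i and each t ∈ I, xᵢ has derivative a₀(t) + a₁(t)·xᵢ(t) + a₂(t)·xᵢ(t)² at t. Assume that for all t ∈ I, x₁(t) ≠ x₂(t) and x₄(t) ≠ x₃(t). Then the cross-ratio function t ↦ ((x₄(t) − x₁(t))·(x₂(t) − x₃(t))) / ((x₁(t) − x₂(t))·(x₄(t) − x₃(t))) is constant on I. -/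
/-!
The difference of two solutions `x`, `y` of a Riccati equation solves the linear equation
`u' = (a₁ + a₂ (x + y)) u`. Rates add under products, so the numerator and the denominator of the
cross-ratio both grow at the rate `2 a₁ + a₂ (x₁ + x₂ + x₃ + x₄)`, and their quotient is constant.
-/

/-- The cross-ratio of four elements of a field, in the ordering of the superposition formula for
the Riccati equation. It has the junk value `0` when `x₁ = x₂` or `x₄ = x₃`. -/
def crossRatio {F : Type*} [Field F] (x₁ x₂ x₃ x₄ : F) : F :=
  ((x₄ - x₁) * (x₂ - x₃)) / ((x₁ - x₂) * (x₄ - x₃))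

theorem hasDerivAt_mul_of_rate {𝕜 R : Type*} [NontriviallyNormedField 𝕜] [NormedCommRing R]
    [NormedAlgebra 𝕜 R] {f g : 𝕜 → R} {r k : R} {t : 𝕜} (hf : HasDerivAt f (r * f t) t)
    (hg : HasDerivAt g (k * g t) t) :
    HasDerivAt (fun u ↦ f u * g u) ((r + k) * (f t * g t)) t :=
  (hf.fun_mul hg).congr_deriv (by ring)

theorem hasDerivAt_div_zero_of_rate_eq {𝕜 F : Type*} [NontriviallyNormedField 𝕜]
    [NontriviallyNormedField F] [NormedAlgebra 𝕜 F] {f g : 𝕜 → F} {r : F} {t : 𝕜}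
    (hf : HasDerivAt f (r * f t) t) (hg : HasDerivAt g (r * g t) t) (hgt : g t ≠ 0) :
    HasDerivAt (fun u ↦ f u / g u) 0 t := by
  have numerator_eq_zero : r * f t * g t - f t * (r * g t) = 0 := by ring
  exact (hf.fun_div hg hgt).congr_deriv (by rw [numerator_eq_zero, zero_div])

/-- `x` solves the Riccati equation `x' = a₀ + a₁ x + a₂ x²` at every point of `s`. The derivative
is two-sided, so the notion is meant for open `s`; the values of `x` may lie in an algebra `R`
over the field `𝕜` of times, such as `ℂ` over `ℝ`. -/
def IsRiccatiSolutionOn {𝕜 R : Type*} [NontriviallyNormedField 𝕜] [NormedCommRing R]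
    [NormedAlgebra 𝕜 R] (a₀ a₁ a₂ x : 𝕜 → R) (s : Set 𝕜) : Prop :=
  ∀ t ∈ s, HasDerivAt x (a₀ t + a₁ t * x t + a₂ t * x t ^ 2) t

namespace IsRiccatiSolutionOn

variable {𝕜 : Type*} [NontriviallyNormedField 𝕜] {s : Set 𝕜} {t : 𝕜}

theorem hasDerivAt_sub {R : Type*} [NormedCommRing R] [NormedAlgebra 𝕜 R]
    {a₀ a₁ a₂ x y : 𝕜 → R} (hx : IsRiccatiSolutionOn a₀ a₁ a₂ x s)
    (hy : IsRiccatiSolutionOn a₀ a₁ a₂ y s) (ht : t ∈ s) :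
    HasDerivAt (fun u ↦ x u - y u) ((a₁ t + a₂ t * (x t + y t)) * (x t - y t)) t :=
  ((hx t ht).fun_sub (hy t ht)).congr_deriv (by ring)

theorem hasDerivAt_crossRatio_zero {F : Type*} [NontriviallyNormedField F] [NormedAlgebra 𝕜 F]
    {a₀ a₁ a₂ x₁ x₂ x₃ x₄ : 𝕜 → F} (h₁ : IsRiccatiSolutionOn a₀ a₁ a₂ x₁ s)
    (h₂ : IsRiccatiSolutionOn a₀ a₁ a₂ x₂ s) (h₃ : IsRiccatiSolutionOn a₀ a₁ a₂ x₃ s)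
    (h₄ : IsRiccatiSolutionOn a₀ a₁ a₂ x₄ s) (ht : t ∈ s) (h₁₂ : x₁ t ≠ x₂ t)
    (h₄₃ : x₄ t ≠ x₃ t) :
    HasDerivAt (fun u ↦ crossRatio (x₁ u) (x₂ u) (x₃ u) (x₄ u)) 0 t := by
  have numerator := hasDerivAt_mul_of_rate (h₄.hasDerivAt_sub h₁ ht) (h₂.hasDerivAt_sub h₃ ht)
  have denominator := hasDerivAt_mul_of_rate (h₁.hasDerivAt_sub h₂ ht) (h₄.hasDerivAt_sub h₃ ht)
  have rate_eq : a₁ t + a₂ t * (x₁ t + x₂ t) + (a₁ t + a₂ t * (x₄ t + x₃ t)) =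
      a₁ t + a₂ t * (x₄ t + x₁ t) + (a₁ t + a₂ t * (x₂ t + x₃ t)) := by ring
  rw [rate_eq] at denominator
  exact hasDerivAt_div_zero_of_rate_eq numerator denominator
    (mul_ne_zero (sub_ne_zero.2 h₁₂) (sub_ne_zero.2 h₄₃))

end IsRiccatiSolutionOn

theorem riccati_cross_ratio_constant_general {𝕜 F : Type*} [RCLike 𝕜] [NontriviallyNormedField F]
    [NormedAlgebra 𝕜 F] {a₀ a₁ a₂ x₁ x₂ x₃ x₄ : 𝕜 → F} {s : Set 𝕜} (hs : IsOpen s)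
    (hs' : IsPreconnected s) (h₁ : IsRiccatiSolutionOn a₀ a₁ a₂ x₁ s)
    (h₂ : IsRiccatiSolutionOn a₀ a₁ a₂ x₂ s) (h₃ : IsRiccatiSolutionOn a₀ a₁ a₂ x₃ s)
    (h₄ : IsRiccatiSolutionOn a₀ a₁ a₂ x₄ s) (h₁₂ : ∀ t ∈ s, x₁ t ≠ x₂ t)
    (h₄₃ : ∀ t ∈ s, x₄ t ≠ x₃ t) :
    ∃ C : F, ∀ t ∈ s, crossRatio (x₁ t) (x₂ t) (x₃ t) (x₄ t) = C := by
  have deriv_zero (t : 𝕜) (ht : t ∈ s) :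
      HasDerivAt (fun u ↦ crossRatio (x₁ u) (x₂ u) (x₃ u) (x₄ u)) 0 t :=
    h₁.hasDerivAt_crossRatio_zero h₂ h₃ h₄ ht (h₁₂ t ht) (h₄₃ t ht)
  exact hs.exists_is_const_of_deriv_eq_zero hs'
    (fun t ht ↦ (deriv_zero t ht).differentiableAt.differentiableWithinAt)
    (fun t ht ↦ (deriv_zero t ht).deriv)

theorem riccati_cross_ratio_constant
    (a₀ a₁ a₂ : ℝ → ℝ) (p q : ℝ) (x₁ x₂ x₃ x₄ : ℝ → ℝ)
    (h₁ : ∀ t ∈ Set.Ioo p q,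
      HasDerivAt x₁ (a₀ t + a₁ t * x₁ t + a₂ t * (x₁ t) ^ 2) t)
    (h₂ : ∀ t ∈ Set.Ioo p q,
      HasDerivAt x₂ (a₀ t + a₁ t * x₂ t + a₂ t * (x₂ t) ^ 2) t)
    (h₃ : ∀ t ∈ Set.Ioo p q,
      HasDerivAt x₃ (a₀ t + a₁ t * x₃ t + a₂ t * (x₃ t) ^ 2) t)
    (h₄ : ∀ t ∈ Set.Ioo p q,
      HasDerivAt x₄ (a₀ t + a₁ t * x₄ t + a₂ t * (x₄ t) ^ 2) t)
    (h12 : ∀ t ∈ Set.Ioo p q, x₁ t ≠ x₂ t)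
    (h43 : ∀ t ∈ Set.Ioo p q, x₄ t ≠ x₃ t) :
    ∃ C : ℝ, ∀ t ∈ Set.Ioo p q,
      ((x₄ t - x₁ t) * (x₂ t - x₃ t)) / ((x₁ t - x₂ t) * (x₄ t - x₃ t)) = C :=
  riccati_cross_ratio_constant_general isOpen_Ioo isPreconnected_Ioo h₁ h₂ h₃ h₄ h12 h43
end

section
/- Let F₁ : ℝ² → ℝ be given by F₁(w, v) = F₂((w − v)/(v·(w + 1))) for a differentiable function F₂ : ℝ → ℝ. Then at every point (w, v) with v ≠ 0 and w ≠ −1, F₁ satisfies the first-order linear partial differential equation (w + 1)·w·∂F₁/∂w + (v + 1)·v·∂F₁/∂v = 0. -/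
section

variable {𝕜 E : Type*} [NontriviallyNormedField 𝕜] [NormedAddCommGroup E] [NormedSpace 𝕜 E]

theorem smul_deriv_comp_add_smul_deriv_comp_eq_zero {F : 𝕜 → E} {u : 𝕜 → 𝕜 → 𝕜}
    {x y ux uy a b : 𝕜} (hF : DifferentiableAt 𝕜 F (u x y))
    (hx : HasDerivAt (fun s => u s y) ux x) (hy : HasDerivAt (fun s => u x s) uy y)
    (hu : a * ux + b * uy = 0) :
    a • deriv (fun s => F (u s y)) x + b • deriv (fun s => F (u x s)) y = 0 := by
  have deriv_fst : deriv (fun s => F (u s y)) x = ux • deriv F (u x y) :=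
    (hF.hasDerivAt.scomp x hx).deriv
  have deriv_snd : deriv (fun s => F (u x s)) y = uy • deriv F (u x y) :=
    (hF.hasDerivAt.scomp y hy).deriv
  rw [deriv_fst, deriv_snd, smul_smul, smul_smul, ← add_smul, hu, zero_smul]

/-- The cross-ratio `(x₂ - x₃)(x - x₁) / ((x₃ - x)(x₂ - x₁))` of four solutions of a Riccati
equation, in the coordinates `w = (x₂ - x) / (x - x₁)` and `v = (x₃ - x) / (x - x₁)`. It is a
first integral of the vector field `(w + 1) w ∂_w + (v + 1) v ∂_v`. It takes the junk value `0`
on the lines `v = 0` and `w = -1`. -/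
def riccatiCrossRatio (w v : 𝕜) : 𝕜 :=
  (w - v) / (v * (w + 1))

theorem hasDerivAt_riccatiCrossRatio_left {w v : 𝕜} (hv : v ≠ 0) (hw : w + 1 ≠ 0) :
    HasDerivAt (fun s => riccatiCrossRatio s v) ((v + 1) / (v * (w + 1) ^ 2)) w := by
  have quotient_rule := ((hasDerivAt_id' w).sub_const v).fun_div
    (((hasDerivAt_id' w).add_const 1).const_mul v) (mul_ne_zero hv hw)
  refine quotient_rule.congr_deriv ?_
  field_simp
  ring

theorem hasDerivAt_riccatiCrossRatio_right {w v : 𝕜} (hv : v ≠ 0) (hw : w + 1 ≠ 0) :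
    HasDerivAt (fun s => riccatiCrossRatio w s) (-w / (v ^ 2 * (w + 1))) v := by
  have quotient_rule := ((hasDerivAt_id' v).const_sub w).fun_div
    ((hasDerivAt_id' v).mul_const (w + 1)) (mul_ne_zero hv hw)
  refine quotient_rule.congr_deriv ?_
  field_simp
  ring

theorem superposition_pde_solution_general {F : 𝕜 → E} {w v : 𝕜}
    (hF : DifferentiableAt 𝕜 F (riccatiCrossRatio w v)) (hv : v ≠ 0) (hw : w ≠ -1) :
    ((w + 1) * w) • deriv (fun s => F (riccatiCrossRatio s v)) w
      + ((v + 1) * v) • deriv (fun s => F (riccatiCrossRatio w s)) v = 0 := by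
  have hw' : w + 1 ≠ 0 := mt eq_neg_of_add_eq_zero_left hw
  have first_integral : (w + 1) * w * ((v + 1) / (v * (w + 1) ^ 2))
      + (v + 1) * v * (-w / (v ^ 2 * (w + 1))) = 0 := by
    field_simp
    ring
  exact smul_deriv_comp_add_smul_deriv_comp_eq_zero hF
    (hasDerivAt_riccatiCrossRatio_left hv hw') (hasDerivAt_riccatiCrossRatio_right hv hw')
    first_integral

end

theorem superposition_pde_solution
    (F₂ : ℝ → ℝ) (hF₂ : Differentiable ℝ F₂)
    (w v : ℝ) (hv : v ≠ 0) (hw : w ≠ -1) :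
    (w + 1) * w * deriv (fun s => F₂ ((s - v) / (v * (s + 1)))) w
      + (v + 1) * v * deriv (fun s => F₂ ((w - s) / (s * (w + 1)))) v = 0 :=
  superposition_pde_solution_general (hF₂ _) hv hw
end
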